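/- arXiv:1101.0803 — 3 statements merged into one kernel-verified Lean document; each statement's English description precedes it below -/
import Mathlib

section
/- Let n ≥ 1, let 1 ≤ m ≤ 2n+1, and let i ∈ {1,…,n}. Then, in the field of rational functions in x_1,…,x_{2n+1} (equivalently, as an identity of formal Laurent series, where the derivatives of the logarithm series are taken termwise), one has: (1+x_{2i}) x_{2i} S_m(x_1,…,x̂_{2i},…,x_{2n+1}) · ∂/∂x_{2i}[ln(1−x_{2i}/x_{2i−1})] + (1+x_{2i−1}) x_{2i−1} S_m(x_1,…,x̂_{2i−1},…,x_{2n+1}) · ∂/∂x_{2i−1}[ln(1−x_{2i}/x_{2i−1})] = x_{2i} · ( S_m(x_1,…,x̂_{2i−1},x̂_{2i},…,x_{2n+1}) − S_{m−1}(x_1,…,x̂_{2i−1},x̂_{2i},…,x_{2n+1}) ). Here ∂/∂x_{2i}[ln(1−x_{2i}/x_{2i−1})] = −1/(x_{2i−1}−x_{2i}) and ∂/∂x_{2i−1}[ln(1−x_{2i}/x_{2i−1})] = x_{2i}/(x_{2i−1}(x_{2i−1}−x_{2i})). -/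
noncomputable section

open Finset MvPolynomial

/-- The `m`-th elementary symmetric polynomial in the variables `x j`, `j ∈ s`
(so `S_0 = 1`, and `S_m = 0` for `m > #s`). -/
def esymOn {R : Type*} [CommSemiring R] {N : ℕ} (s : Finset (Fin N)) (m : ℕ)
    (x : Fin N → R) : R :=
  ∑ A ∈ Finset.powersetCard m s, ∏ j ∈ A, x j

theorem multiset_esymm_cons_succ {R : Type*} [CommSemiring R] (r : R) (s : Multiset R) (m : ℕ) :
    (r ::ₘ s).esymm (m + 1) = s.esymm (m + 1) + r * s.esymm m := by
  simp only [Multiset.esymm, Multiset.powersetCard_cons, Multiset.map_add, Multiset.sum_add,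
    Multiset.map_map, Function.comp_def, Multiset.prod_cons, Multiset.sum_map_mul_left]

section CommSemiring

variable {R : Type*} [CommSemiring R] {N : ℕ}

theorem esymOn_eq_esymm_map (s : Finset (Fin N)) (m : ℕ) (x : Fin N → R) :
    esymOn s m x = (s.val.map x).esymm m :=
  (Finset.esymm_map_val x s m).symm

theorem esymOn_succ_eq_erase_add {s : Finset (Fin N)} {c : Fin N} (hc : c ∈ s) (m : ℕ)
    (x : Fin N → R) :
    esymOn s (m + 1) x = esymOn (s.erase c) (m + 1) x + x c * esymOn (s.erase c) m x := by
  have hcons : s.val.map x = x c ::ₘ (s.erase c).val.map x := by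
    rw [← Multiset.map_cons, Finset.erase_val, Multiset.cons_erase hc]
  simp only [esymOn_eq_esymm_map, hcons, multiset_esymm_cons_succ]

end CommSemiring

/-- The logarithmic derivative identity with the common denominator `x a - x b` cleared. Each
`S_{m+1}` retains exactly one of `x a`, `x b`, so expanding it in that variable produces the same
`x a * x b` term on both sides of the subtraction. -/
theorem one_add_mul_esymOn_erase_sub {R : Type*} [CommRing R] {N : ℕ} {s : Finset (Fin N)}
    {a b : Fin N} (ha : a ∈ s) (hb : b ∈ s) (m : ℕ) (x : Fin N → R) :
    (1 + x a) * esymOn (s.erase a) (m + 1) x - (1 + x b) * esymOn (s.erase b) (m + 1) x =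
      (x a - x b) *
        (esymOn ((s.erase a).erase b) (m + 1) x - esymOn ((s.erase a).erase b) m x) := by
  rcases eq_or_ne a b with rfl | hab
  · simp only [sub_self, zero_mul]
  · rw [esymOn_succ_eq_erase_add (mem_erase.2 ⟨hab.symm, hb⟩),
      esymOn_succ_eq_erase_add (mem_erase.2 ⟨hab, ha⟩), erase_right_comm (a := b)]
    ring

theorem log_derivative_identity_general {K : Type*} [Field K] {N : ℕ} {s : Finset (Fin N)}
    {a b : Fin N} (ha : a ∈ s) (hb : b ∈ s) (m : ℕ) {x : Fin N → K} (hxa : x a ≠ 0)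
    (hxab : x a ≠ x b) :
    (1 + x b) * x b * esymOn (s.erase b) (m + 1) x * (-(1 / (x a - x b))) +
        (1 + x a) * x a * esymOn (s.erase a) (m + 1) x * (x b / (x a * (x a - x b))) =
      x b * (esymOn ((s.erase a).erase b) (m + 1) x - esymOn ((s.erase a).erase b) m x) := by
  have hsub : x a - x b ≠ 0 := sub_ne_zero.2 hxab
  calc
    _ = x b * ((1 + x a) * esymOn (s.erase a) (m + 1) x -
          (1 + x b) * esymOn (s.erase b) (m + 1) x) / (x a - x b) := by
      field_simp
      ring
    _ = _ := by
      rw [one_add_mul_esymOn_erase_sub ha hb, mul_left_comm, mul_div_cancel_left₀ _ hsub]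

section AlgebraMapX

variable {σ R A : Type*} [CommSemiring R] [Nontrivial R] [CommSemiring A]
  [Algebra (MvPolynomial σ R) A] [FaithfulSMul (MvPolynomial σ R) A]

theorem algebraMap_X_injective :
    Function.Injective fun j : σ => algebraMap (MvPolynomial σ R) A (X j) :=
  (FaithfulSMul.algebraMap_injective _ _).comp X_injective

theorem algebraMap_X_ne_zero (j : σ) : algebraMap (MvPolynomial σ R) A (X j) ≠ 0 :=
  (map_ne_zero_iff _ (FaithfulSMul.algebraMap_injective _ _)).2 (X_ne_zero j)

end AlgebraMapX

/-- Lemma on the logarithmic derivative terms.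
In the field of rational functions in `x_1,…,x_{2n+1}` (here the fraction field of
`ℚ[x_1,…,x_{2n+1}]`), for `1 ≤ m ≤ 2n+1` and a pair index `i ∈ {1,…,n}`
(0-based `i0 : Fin n`, so the 1-based variables `x_{2i-1}, x_{2i}` have 0-based
indices `a = 2 i0`, `b = 2 i0 + 1`), using
`∂/∂x_{2i} ln(1-x_{2i}/x_{2i-1}) = -1/(x_{2i-1}-x_{2i})` and
`∂/∂x_{2i-1} ln(1-x_{2i}/x_{2i-1}) = x_{2i}/(x_{2i-1}(x_{2i-1}-x_{2i}))`:
`(1+x_{2i}) x_{2i} S_m(…,x̂_{2i},…)·(-1/(x_{2i-1}-x_{2i}))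
 + (1+x_{2i-1}) x_{2i-1} S_m(…,x̂_{2i-1},…)·(x_{2i}/(x_{2i-1}(x_{2i-1}-x_{2i})))
 = x_{2i} (S_m(…,x̂_{2i-1},x̂_{2i},…) - S_{m-1}(…,x̂_{2i-1},x̂_{2i},…))`. -/
theorem log_derivative_identity (n : ℕ) (hn : 1 ≤ n) (m : ℕ) (hm1 : 1 ≤ m)
    (hm2 : m ≤ 2 * n + 1) (i0 : Fin n) :
    letI K := FractionRing (MvPolynomial (Fin (2 * n + 1)) ℚ)
    let x : Fin (2 * n + 1) → K :=
      fun j => algebraMap (MvPolynomial (Fin (2 * n + 1)) ℚ) K (X j)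
    let a : Fin (2 * n + 1) := ⟨2 * (i0 : ℕ), by omega⟩
    let b : Fin (2 * n + 1) := ⟨2 * (i0 : ℕ) + 1, by omega⟩
    (1 + x b) * x b * esymOn (Finset.univ.erase b) m x * (-(1 / (x a - x b))) +
        (1 + x a) * x a * esymOn (Finset.univ.erase a) m x *
          (x b / (x a * (x a - x b))) =
      x b * (esymOn ((Finset.univ.erase a).erase b) m x -
        esymOn ((Finset.univ.erase a).erase b) (m - 1) x) := by
  obtain ⟨k, rfl⟩ := Nat.exists_eq_add_of_le' hm1
  exact log_derivative_identity_general (mem_univ _) (mem_univ _) k (algebraMap_X_ne_zero _)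
    (algebraMap_X_injective.ne (by simp only [ne_eq, Fin.mk.injEq]; omega))

end
end

section
/- Let n ≥ 1, let p ≥ 1, let 1 ≤ m ≤ 2n+1, and let i ≠ j be indices in {1,…,2n+1}. Then in the polynomial ring in the variables x_1,…,x_{2n+1}: (1+x_i) x_i S_m(x_1,…,x̂_i,…,x_{2n+1}) · ∂/∂x_i[(x_i−x_j)^p] + (1+x_j) x_j S_m(x_1,…,x̂_j,…,x_{2n+1}) · ∂/∂x_j[(x_i−x_j)^p] = p · ( x_i x_j S_{m−1}(x_1,…,x̂_i,…,x̂_j,…,x_{2n+1}) + S_m(x_1,…,x̂_i,…,x̂_j,…,x_{2n+1}) + (x_i+x_j) S_m(x_1,…,x̂_i,…,x̂_j,…,x_{2n+1}) ) · (x_i−x_j)^p. (Equivalently, (1+x_i)x_i S_m(x̂_i) − (1+x_j)x_j S_m(x̂_j) = (x_i−x_j)·( x_i x_j S_{m−1}(x̂_i,x̂_j) + S_m(x̂_i,x̂_j) + (x_i+x_j) S_m(x̂_i,x̂_j) ).) -/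
noncomputable section

open Finset MvPolynomial

/-!
The derivatives `∂_i (x_i - x_j)^p` and `∂_j (x_i - x_j)^p` are opposite to each other, so the
left side is `p (x_i - x_j)^(p-1)` times the antisymmetric expression
`(1 + x_i) x_i S_m(x̂_i) - (1 + x_j) x_j S_m(x̂_j)`. Splitting off the remaining variable,
`S_m(x̂_i) = S_m(x̂_i, x̂_j) + x_j S_{m-1}(x̂_i, x̂_j)`, exhibits the missing factor `x_i - x_j`.
-/

section ElementarySymmetric

variable {R : Type*} {N : ℕ}

theorem esymm_cons_succ [CommSemiring R] (a : R) (s : Multiset R) (m : ℕ) :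
    (a ::ₘ s).esymm (m + 1) = s.esymm (m + 1) + a * s.esymm m := by
  simp [Multiset.esymm, Multiset.powersetCard_cons, Multiset.sum_map_mul_left]

theorem esymOn_eq_multiset_esymm [CommSemiring R] (s : Finset (Fin N)) (m : ℕ) (x : Fin N → R) :
    esymOn s m x = (s.val.map x).esymm m :=
  (Finset.esymm_map_val x s m).symm

theorem esymOn_succ_eq_add_erase [CommSemiring R] {s : Finset (Fin N)} {j : Fin N} (hj : j ∈ s)
    (m : ℕ) (x : Fin N → R) :
    esymOn s (m + 1) x = esymOn (s.erase j) (m + 1) x + x j * esymOn (s.erase j) m x := by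
  have hcons : s.val.map x = x j ::ₘ (s.erase j).val.map x := by
    rw [Finset.erase_val, ← Multiset.map_cons, Multiset.cons_erase hj]
  simp only [esymOn_eq_multiset_esymm, hcons, esymm_cons_succ]

theorem mul_esymOn_erase_sub_mul_esymOn_erase [CommRing R] {s : Finset (Fin N)} {i j : Fin N}
    (hi : i ∈ s) (hj : j ∈ s) (hij : i ≠ j) (m : ℕ) (x : Fin N → R) :
    (1 + x i) * x i * esymOn (s.erase i) (m + 1) x -
        (1 + x j) * x j * esymOn (s.erase j) (m + 1) x =
      (x i - x j) *
        (x i * x j * esymOn ((s.erase i).erase j) m x +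
          esymOn ((s.erase i).erase j) (m + 1) x +
          (x i + x j) * esymOn ((s.erase i).erase j) (m + 1) x) := by
  rw [esymOn_succ_eq_add_erase (Finset.mem_erase.2 ⟨hij.symm, hj⟩),
    esymOn_succ_eq_add_erase (Finset.mem_erase.2 ⟨hij, hi⟩),
    Finset.erase_right_comm (a := j) (b := i)]
  ring

end ElementarySymmetric

section PartialDerivative

variable {σ R : Type*} [CommRing R] {i j : σ}

theorem pderiv_X_sub_X_pow_left (hij : i ≠ j) (p : ℕ) :
    pderiv i ((X i - X j : MvPolynomial σ R) ^ p) =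
      (p : MvPolynomial σ R) * (X i - X j) ^ (p - 1) := by
  rw [pderiv_pow, map_sub, pderiv_X_self, pderiv_X_of_ne hij.symm, sub_zero, mul_one]

theorem pderiv_X_sub_X_pow_right (hij : i ≠ j) (p : ℕ) :
    pderiv j ((X i - X j : MvPolynomial σ R) ^ p) =
      -((p : MvPolynomial σ R) * (X i - X j) ^ (p - 1)) := by
  rw [pderiv_pow, map_sub, pderiv_X_self, pderiv_X_of_ne hij, zero_sub, mul_neg_one]

end PartialDerivative

theorem natCast_mul_pow_pred_mul {R : Type*} [Semiring R] (a : R) (p : ℕ) :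
    (p : R) * a ^ (p - 1) * a = p * a ^ p := by
  rcases eq_or_ne p 0 with rfl | hp
  · simp only [Nat.cast_zero, zero_mul]
  · rw [mul_assoc, pow_sub_one_mul hp]

theorem vandermonde_derivative_identity_general {R : Type*} [CommRing R] {N : ℕ}
    {s : Finset (Fin N)} {i j : Fin N} (hi : i ∈ s) (hj : j ∈ s) (hij : i ≠ j) (m p : ℕ) :
    (1 + (X i : MvPolynomial (Fin N) R)) * X i *
          esymOn (s.erase i) (m + 1) X * pderiv i ((X i - X j) ^ p) +
        (1 + X j) * X j * esymOn (s.erase j) (m + 1) X * pderiv j ((X i - X j) ^ p) =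
      (p : MvPolynomial (Fin N) R) *
          (X i * X j * esymOn ((s.erase i).erase j) m X +
            esymOn ((s.erase i).erase j) (m + 1) X +
            (X i + X j) * esymOn ((s.erase i).erase j) (m + 1) X) *
          (X i - X j) ^ p := by
  rw [pderiv_X_sub_X_pow_left hij, pderiv_X_sub_X_pow_right hij,
    mul_right_comm (p : MvPolynomial (Fin N) R), ← natCast_mul_pow_pred_mul]
  linear_combination (p : MvPolynomial (Fin N) R) * (X i - X j) ^ (p - 1) *
    mul_esymOn_erase_sub_mul_esymOn_erase hi hj hij m (X : Fin N → MvPolynomial (Fin N) R)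

/-- In `ℚ[x_1,…,x_{2n+1}]`, for `p ≥ 1`, `1 ≤ m ≤ 2n+1` and
indices `i ≠ j`:
`(1+x_i) x_i S_m(…,x̂_i,…) ∂/∂x_i[(x_i-x_j)^p] + (1+x_j) x_j S_m(…,x̂_j,…) ∂/∂x_j[(x_i-x_j)^p]
 = p (x_i x_j S_{m-1}(…,x̂_i,x̂_j,…) + S_m(…,x̂_i,x̂_j,…) + (x_i+x_j) S_m(…,x̂_i,x̂_j,…)) (x_i-x_j)^p`. -/
theorem vandermonde_derivative_identity (n p : ℕ) (hn : 1 ≤ n) (hp : 1 ≤ p)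
    (m : ℕ) (hm1 : 1 ≤ m) (hm2 : m ≤ 2 * n + 1) (i j : Fin (2 * n + 1)) (hij : i ≠ j) :
    (1 + (X i : MvPolynomial (Fin (2 * n + 1)) ℚ)) * X i *
          esymOn (Finset.univ.erase i) m X * pderiv i ((X i - X j) ^ p) +
        (1 + X j) * X j * esymOn (Finset.univ.erase j) m X *
          pderiv j ((X i - X j) ^ p) =
      (p : MvPolynomial (Fin (2 * n + 1)) ℚ) *
          (X i * X j * esymOn ((Finset.univ.erase i).erase j) (m - 1) X +
            esymOn ((Finset.univ.erase i).erase j) m X +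
            (X i + X j) * esymOn ((Finset.univ.erase i).erase j) m X) *
          (X i - X j) ^ p := by
  obtain ⟨k, rfl⟩ := Nat.exists_eq_add_of_le' hm1
  exact vandermonde_derivative_identity_general (mem_univ i) (mem_univ j) hij k p

end
end

section
/- Let p ≥ 3 be an odd integer. Then the following (15p−5)/2 holomorphic functions on the complex upper half-plane ℍ are linearly independent over ℂ: the functions τ ↦ τ^i·(θ''_{p−r}(τ) − θ''_{p+r}(τ)) for 1 ≤ r ≤ (p−1)/2 and 0 ≤ i ≤ 2; the functions τ ↦ τ^i·θ'_r(τ) for 1 ≤ r ≤ 2p−1 and 0 ≤ i ≤ 1; and the functions τ ↦ θ_r(τ) for 0 ≤ r ≤ 2p. -/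
noncomputable section

open Complex

/-- The `k`-th normalized derivative of the theta constant
`θ_r(τ) = ∑_{j ∈ r/(4p)+ℤ} q^{2pj²}`, `q = e^{2πiτ}`; i.e. the result of applying
`q·d/dq = (2πi)⁻¹ d/dτ` termwise `k` times (`k = 0` gives `θ_r`, `k = 1` gives `θ'_r`,
`k = 2` gives `θ''_r`). -/
def thetaDeriv (p : ℕ) (k : ℕ) (r : ℤ) (τ : ℂ) : ℂ :=
  ∑' j : ℤ, (2 * (p : ℂ) * ((r : ℂ) / (4 * p) + j) ^ 2) ^ k *
    Complex.exp (2 * Real.pi * Complex.I * τ * (2 * (p : ℂ) * ((r : ℂ) / (4 * p) + j) ^ 2))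

/-!
Since `2p(r/(4p) + j)² = (r + 4pj)²/(8p)`, every `θ_r^{(k)}` is a power series in
`q^{1/(8p)} = e^{2πiτ/(8p)}` whose `N`-th coefficient is `(N/(8p))^k` times the number of
`n ≡ r mod 4p` with `n² = N`. For `0 ≤ r ≤ 2p` these series have pairwise disjoint infinite
supports, so a linear relation among the `θ_r^{(k)}` gives, for each `r`, a polynomial in `N` with
infinitely many zeros. Powers of `τ` are then separated because all these functions are
`8p`-periodic, while a polynomial in `τ` with periodic coefficients vanishes identically only if its
coefficients do. Hence all `τ^i θ_r^{(k)}` with `0 ≤ r ≤ 2p` are linearly independent. The given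
family arises by subtracting from some of them a vector in the span of the others.
-/

open Polynomial UpperHalfPlane Function.Periodic

section LinearAlgebra

lemma linearIndependent_sub_of_mem_span_compl_range {R M ι κ : Type*} [CommRing R]
    [AddCommGroup M] [Module R M] {v : ι → M} (hv : LinearIndependent R v) {e : κ → ι}
    (he : Function.Injective e) {w : κ → M}
    (hw : ∀ a, w a ∈ Submodule.span R (v '' (Set.range e)ᶜ)) :
    LinearIndependent R fun a => v (e a) - w a := by
  simp only [Finsupp.mem_span_image_iff_linearCombination] at hw
  choose l hl hlw using hw
  have hl_apply (a b : κ) : l a (e b) = 0 :=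
    Finsupp.notMem_support_iff.1 fun h => hl a h ⟨b, rfl⟩
  have hu : LinearIndependent R fun a => Finsupp.single (e a) (1 : R) - l a := by
    refine .of_pairwise_dual_eq_zero_one _ (fun a => Finsupp.lapply (e a)) (fun a b hab => ?_) ?_
    · simp [hl_apply, Finsupp.single_eq_of_ne (he.ne hab)]
    · simp [hl_apply]
  simpa [Function.comp_def, hlw] using
    hu.map' (Finsupp.linearCombination R v) (LinearMap.ker_eq_bot.2 hv)

lemma linearIndependent_pow_of_transcendental {R A : Type*} [CommRing R] [Ring A] [Algebra R A]
    {x : A} (hx : Transcendental R x) : LinearIndependent R fun n : ℕ => x ^ n := by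
  simpa [Function.comp_def] using (basisMonomials R).linearIndependent.map' (aeval x).toLinearMap
    (LinearMap.ker_eq_bot.2 (transcendental_iff_injective.1 hx))

/-- On the support of `m i` the other `m j` vanish, so a relation restricts there to a polynomial
in `x`. -/
lemma linearIndependent_mul_pow_of_disjoint_support {K X ι : Type*} [CommRing K] [IsDomain K]
    {m : ι → X → K} (hm : Pairwise fun i j => Disjoint (m i).support (m j).support)
    (hinf : ∀ i, (m i).support.Infinite) {x : X → K} (hx : Function.Injective x) :
    LinearIndependent K fun (y : ℕ × ι) => m y.2 * x ^ y.1 := by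
  classical
  refine linearIndependent_iff'.2 fun s g hg => ?_
  rintro ⟨k, i⟩ hki
  let P : K[X] := ∑ y ∈ s with y.2 = i, monomial y.1 (g y)
  have hroot : ∀ N ∈ (m i).support, P.IsRoot (x N) := by
    intro N hN
    refine (mul_eq_zero.1 ?_).resolve_right hN
    refine Eq.trans ?_ (congrFun hg N)
    simp only [P, eval_finsetSum, Finset.sum_mul, Finset.sum_apply, Finset.sum_filter]
    refine Finset.sum_congr rfl fun y _ => ?_
    split_ifs with hy
    · rw [eval_monomial]
      simp only [hy, Pi.smul_apply, Pi.mul_apply, Pi.pow_apply, smul_eq_mul]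
      ring
    · have : m y.2 N = 0 := Function.notMem_support.1 ((hm hy).notMem_of_mem_right hN)
      simp [this]
  have hP : P = 0 := P.eq_zero_of_infinite_isRoot <|
    ((hinf i).image hx.injOn).mono (Set.image_subset_iff.2 hroot)
  have hcoeff : P.coeff k = g (k, i) := by
    rw [finsetSum_coeff, Finset.sum_eq_single_of_mem (k, i) (by simp [hki]), coeff_monomial_same]
    rintro ⟨k', j⟩ hj hne
    obtain rfl : j = i := (Finset.mem_filter.1 hj).2
    exact coeff_monomial_of_ne _ fun hk => hne (by rw [hk])
  rw [← hcoeff, hP, coeff_zero]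

end LinearAlgebra

section Translation

variable {K X ι : Type*} [CommRing K] {T : X → X}

variable (K T) in
/-- The algebra of `K`-valued functions on `X` invariant under `T : X → X`; when `T` is a
translation these are the periodic functions. -/
def invariantFunctions : Subalgebra K (X → K) where
  carrier := {f | ∀ x, f (T x) = f x}
  mul_mem' hf hg x := by simp [hf x, hg x]
  add_mem' hf hg x := by simp [hf x, hg x]
  algebraMap_mem' _ _ := rfl

variable [IsDomain K] [CharZero K] {z : X → K} {h : K}

lemma transcendental_invariantFunctions (hh : h ≠ 0) (hz : ∀ x, z (T x) = z x + h) :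
    Transcendental (invariantFunctions K T) z := by
  refine transcendental_iff.2 fun P hP => Polynomial.ext fun k => Subtype.ext <| funext fun x => ?_
  let evalAt (y : X) : invariantFunctions K T →+* K :=
    (Pi.evalRingHom (fun _ => K) y).comp (invariantFunctions K T).subtype
  have hz_iter (n : ℕ) : z (T^[n] x) = z x + n * h := by
    induction n with
    | zero => simp
    | succ n ih => rw [Function.iterate_succ_apply', hz, ih]; push_cast; ring
  have hevalAt_iter (n : ℕ) : evalAt (T^[n] x) = evalAt x := by
    induction n with
    | zero => rfl
    | succ n ih => rw [Function.iterate_succ_apply', ← ih]; ext f; exact f.2 _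
  have hroot (n : ℕ) : (P.map (evalAt x)).IsRoot (z x + n * h) := by
    rw [IsRoot, eval_map, ← hz_iter, ← hevalAt_iter n]
    exact (hom_eval₂ P _ (Pi.evalRingHom (fun _ => K) (T^[n] x)) z).symm.trans
      (congrFun hP (T^[n] x))
  have hinj : Function.Injective fun n : ℕ => z x + n * h := fun a b hab => by
    simpa [hh] using hab
  have hP0 : P.map (evalAt x) = 0 := eq_zero_of_infinite_isRoot _ <|
    (Set.infinite_range_of_injective hinj).mono (Set.range_subset_iff.2 hroot)
  simpa [evalAt] using congrArg (coeff · k) hP0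

lemma linearIndependent_mul_pow_of_invariant {f : ι → X → K} (hf : LinearIndependent K f)
    (hfT : ∀ i x, f i (T x) = f i x) (hh : h ≠ 0) (hz : ∀ x, z (T x) = z x + h) :
    LinearIndependent K fun (y : ι × ℕ) => f y.1 * z ^ y.2 := by
  have hf' : LinearIndependent K fun i => (⟨f i, hfT i⟩ : invariantFunctions K T) :=
    .of_comp (invariantFunctions K T).val.toLinearMap hf
  have hz' : LinearIndependent (invariantFunctions K T) fun n : ℕ => z ^ n :=
    linearIndependent_pow_of_transcendental (transcendental_invariantFunctions hh hz)
  simpa only [Subalgebra.smul_def, smul_eq_mul] using linearIndependent_smul hf' hz'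

end Translation

section QExpansion

variable {h : ℝ}

lemma coeff_eq_zero_of_hasSum_qParam_zero (hh : 0 < h) {c : ℕ → ℂ}
    (hc : ∀ τ : ℍ, HasSum (fun N => c N • qParam h τ ^ N) 0) : c = 0 := by
  have hcusp : UpperHalfPlane.cuspFunction h 0 = 0 := by
    simpa [UpperHalfPlane.cuspFunction, Function.Periodic.cuspFunction]
      using! (tendsto_const_nhds.mono_left nhdsWithin_le_nhds).limUnder_eq
  have hana : AnalyticAt ℂ (UpperHalfPlane.cuspFunction h 0) 0 := hcusp ▸ analyticAt_const
  have hseries := (hasFPowerSeriesOnBall_cuspFunction hh hana hc).hasFPowerSeriesAt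
  rw [hcusp] at hseries
  exact (FormalMultilinearSeries.ofScalars_series_eq_zero ..).1 hseries.eq_zero

lemma linearIndependent_of_hasSum_qParam (hh : 0 < h) {ι : Type*} {f : ι → ℍ → ℂ}
    {c : ι → ℕ → ℂ} (hc : LinearIndependent ℂ c)
    (hf : ∀ i (τ : ℍ), HasSum (fun N => c i N • qParam h τ ^ N) (f i τ)) :
    LinearIndependent ℂ f := by
  refine linearIndependent_iff'.2 fun s g hg => linearIndependent_iff'.1 hc s g ?_
  refine coeff_eq_zero_of_hasSum_qParam_zero hh fun τ => ?_
  have hsum := hasSum_sum fun i (_ : i ∈ s) => (hf i τ).const_smul (g i)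
  have hzero : ∑ i ∈ s, g i • f i τ = 0 := by simpa using congrFun hg τ
  rw [hzero] at hsum
  simpa [Finset.sum_mul, mul_assoc] using hsum

lemma eq_of_hasSum_qParam_vadd (hh : h ≠ 0) {f : ℍ → ℂ} {c : ℕ → ℂ}
    (hf : ∀ τ : ℍ, HasSum (fun N => c N • qParam h τ ^ N) (f τ)) (τ : ℍ) : f (h +ᵥ τ) = f τ := by
  have hq : qParam h (h +ᵥ τ : ℍ) = qParam h τ := by
    have hh' : (h : ℂ) ≠ 0 := ofReal_ne_zero.2 hh
    refine Complex.exp_eq_exp_iff_exists_int.2 ⟨1, ?_⟩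
    rw [coe_vadd]
    field_simp
    push_cast
    ring
  exact (hq ▸ hf (h +ᵥ τ)).unique (hf τ)

end QExpansion

section ThetaExpansion

/-- The exponent `(r + 4pj)²` of `q^{1/(8p)}` in the `j`-th term of `θ_r`, as a natural number. -/
def thetaExponent (p : ℕ) (r j : ℤ) : ℕ := (r + 4 * p * j).natAbs ^ 2

/-- The `N`-th coefficient of the expansion of `θ_r` in powers of `q^{1/(8p)}`. -/
def thetaCoeff (p : ℕ) (r : ℤ) (N : ℕ) : ℕ := (thetaExponent p r ⁻¹' {N}).ncard

variable {p : ℕ}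

lemma injective_add_four_mul (hp : 0 < p) (r : ℤ) :
    Function.Injective fun j : ℤ => r + 4 * p * j := fun a b hab => by
  simpa [hp.ne'] using hab

lemma thetaExponent_eq_iff {r s i j : ℤ} : thetaExponent p r i = thetaExponent p s j ↔
    r + 4 * p * i = s + 4 * p * j ∨ r + 4 * p * i = -(s + 4 * p * j) := by
  rw [thetaExponent, thetaExponent, Nat.pow_left_inj two_ne_zero, Int.natAbs_eq_natAbs_iff]

lemma finite_thetaExponent_fiber (hp : 0 < p) (r : ℤ) (N : ℕ) :
    (thetaExponent p r ⁻¹' {N}).Finite := by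
  refine ((Set.finite_Icc (-(N : ℤ)) N).preimage
    (injective_add_four_mul hp r).injOn).subset ?_
  rintro j rfl
  have := Nat.le_self_pow two_ne_zero (r + 4 * p * j).natAbs
  simp only [thetaExponent, Set.mem_preimage, Set.mem_Icc]
  omega

lemma infinite_range_thetaExponent (hp : 0 < p) (r : ℤ) :
    (Set.range (thetaExponent p r)).Infinite := fun hfin =>
  Set.infinite_univ <| by
    simpa using hfin.preimage' fun N _ => finite_thetaExponent_fiber hp r N

lemma support_thetaCoeff (hp : 0 < p) (r : ℤ) :
    (thetaCoeff p r).support = Set.range (thetaExponent p r) := by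
  ext N
  rw [Function.mem_support, thetaCoeff, ← Nat.pos_iff_ne_zero,
    Set.ncard_pos (finite_thetaExponent_fiber hp r N), Set.preimage_singleton_nonempty]

lemma eq_of_thetaExponent_eq {r s i j : ℤ} (hr : r ∈ Set.Icc 0 (2 * p : ℤ))
    (hs : s ∈ Set.Icc 0 (2 * p : ℤ)) (h : thetaExponent p r i = thetaExponent p s j) : r = s := by
  obtain ⟨hr0, hr2⟩ := hr
  obtain ⟨hs0, hs2⟩ := hs
  rcases eq_or_ne r s with hrs | hrs
  · exact hrs
  rcases thetaExponent_eq_iff.1 h with h | h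
  · have hdvd : (4 * p : ℤ) ∣ r - s := ⟨j - i, by linarith⟩
    have := Int.eq_zero_of_abs_lt_dvd hdvd (by rw [abs_lt]; omega)
    omega
  · have hdvd : (4 * p : ℤ) ∣ r + s := ⟨-j - i, by linarith⟩
    have := Int.eq_zero_of_abs_lt_dvd hdvd (by rw [abs_lt]; omega)
    omega

lemma summable_natAbs_sq_pow_mul_geometric (k : ℕ) {q : ℂ} (hq : ‖q‖ < 1) :
    Summable fun n : ℤ => ((n.natAbs ^ 2 : ℕ) : ℂ) ^ k * q ^ n.natAbs ^ 2 := by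
  have hnat : Summable fun n : ℕ => ((n ^ 2 : ℕ) : ℂ) ^ k * q ^ n ^ 2 :=
    (summable_pow_mul_geometric_of_norm_lt_one k hq).comp_injective
      (Nat.pow_left_injective two_ne_zero)
  exact .of_nat_of_neg (by simpa using hnat) (by simpa using hnat)

lemma summable_thetaExponent (hp : 0 < p) (k : ℕ) (r : ℤ) {q : ℂ} (hq : ‖q‖ < 1) :
    Summable fun j : ℤ => ((thetaExponent p r j : ℂ) / (8 * p)) ^ k * q ^ thetaExponent p r j := by
  refine (((summable_natAbs_sq_pow_mul_geometric k hq).comp_injective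
    (injective_add_four_mul hp r)).mul_left ((8 * p : ℂ) ^ k)⁻¹).congr fun j => ?_
  simp only [thetaExponent, Function.comp_apply, div_pow]
  ring

lemma thetaDeriv_eq_tsum_thetaExponent (hp : 0 < p) (k : ℕ) (r : ℤ) (τ : ℂ) :
    thetaDeriv p k r τ = ∑' j : ℤ,
      ((thetaExponent p r j : ℂ) / (8 * p)) ^ k * qParam (8 * p) τ ^ thetaExponent p r j := by
  refine tsum_congr fun j => ?_
  have hsq : 2 * (p : ℂ) * ((r : ℂ) / (4 * p) + j) ^ 2 = (thetaExponent p r j : ℂ) / (8 * p) := by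
    have hcast : (thetaExponent p r j : ℂ) = (r + 4 * p * j) ^ 2 := by
      exact_mod_cast congrArg (Int.cast : ℤ → ℂ) (Int.natAbs_sq (r + 4 * p * j))
    have hp' : (p : ℂ) ≠ 0 := by exact_mod_cast hp.ne'
    rw [hcast]
    field_simp
    ring
  rw [hsq, qParam, ← Complex.exp_nat_mul]
  congr 2
  push_cast
  ring

lemma hasSum_qParam_thetaDeriv (hp : 0 < p) (k : ℕ) (r : ℤ) (τ : ℍ) :
    HasSum (fun N : ℕ => (thetaCoeff p r N * ((N : ℂ) / (8 * p)) ^ k) • qParam (8 * p) τ ^ N)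
      (thetaDeriv p k r τ) := by
  have hq : ‖qParam (8 * p) τ‖ < 1 := norm_qParam_lt_one (by positivity) τ.im_pos
  rw [thetaDeriv_eq_tsum_thetaExponent hp]
  refine ((summable_thetaExponent hp k r hq).hasSum.tsum_fiberwise (thetaExponent p r)).congr_fun
    fun N => ?_
  have hconst (j : thetaExponent p r ⁻¹' {N}) : thetaExponent p r j = N := j.2
  simp only [hconst, tsum_const, thetaCoeff, Nat.card_coe_set_eq, nsmul_eq_mul, smul_eq_mul,
    mul_assoc]

end ThetaExpansion

section ThetaIndependence

variable {p : ℕ}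

lemma linearIndependent_thetaCoeff (hp : 0 < p) :
    LinearIndependent ℂ fun (y : ℕ × Set.Icc 0 (2 * p : ℤ)) (N : ℕ) =>
      (thetaCoeff p y.2 N : ℂ) * ((N : ℂ) / (8 * p)) ^ y.1 := by
  have hsupp (r : ℤ) : (fun N => (thetaCoeff p r N : ℂ)).support = Set.range (thetaExponent p r) :=
    (Function.support_comp_eq _ Nat.cast_eq_zero _).trans (support_thetaCoeff hp r)
  refine linearIndependent_mul_pow_of_disjoint_support
    (m := fun (r : Set.Icc 0 (2 * p : ℤ)) N => (thetaCoeff p r N : ℂ)) (x := fun N => N / (8 * p))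
    (fun r s hrs => ?_) (fun r => ?_) (fun M N hMN => ?_)
  · simp only [hsupp, Set.disjoint_range_iff]
    exact fun i j h => hrs (Subtype.ext (eq_of_thetaExponent_eq r.2 s.2 h))
  · rw [hsupp]
    exact infinite_range_thetaExponent hp r
  · simpa [div_left_inj', hp.ne'] using hMN

theorem linearIndependent_thetaDeriv_mul_pow (hp : 0 < p) :
    LinearIndependent ℂ fun (y : (ℕ × Set.Icc 0 (2 * p : ℤ)) × ℕ) (τ : ℍ) =>
      thetaDeriv p y.1.1 y.1.2 τ * (τ : ℂ) ^ y.2 := by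
  have hperiod : (0 : ℝ) < 8 * p := by positivity
  have hq (y : ℕ × Set.Icc 0 (2 * p : ℤ)) (τ : ℍ) := hasSum_qParam_thetaDeriv hp y.1 y.2 τ
  have hindep : LinearIndependent ℂ fun (y : ℕ × Set.Icc 0 (2 * p : ℤ)) (τ : ℍ) =>
      thetaDeriv p y.1 y.2 τ :=
    linearIndependent_of_hasSum_qParam hperiod (linearIndependent_thetaCoeff hp) hq
  have hinvariant (y : ℕ × Set.Icc 0 (2 * p : ℤ)) (τ : ℍ) :
      thetaDeriv p y.1 y.2 ((8 * p : ℝ) +ᵥ τ : ℍ) = thetaDeriv p y.1 y.2 τ :=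
    eq_of_hasSum_qParam_vadd hperiod.ne' (hq y) τ
  have htranslate (τ : ℍ) : (((8 * p : ℝ) +ᵥ τ : ℍ) : ℂ) = τ + (8 * p : ℝ) := by
    rw [coe_vadd, add_comm]
  exact (linearIndependent_mul_pow_of_invariant (z := fun τ : ℍ => (τ : ℂ)) hindep hinvariant
    (ofReal_ne_zero.2 hperiod.ne') htranslate :)

theorem theta_family_linearIndependent_general (hp : 0 < p) :
    LinearIndependent ℂ (Sum.elim
      (fun (a : Fin ((p - 1) / 2) × Fin 3) (τ : ℍ) => (τ : ℂ) ^ (a.2 : ℕ) *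
        (thetaDeriv p 2 (p - ((a.1 : ℕ) + 1)) τ - thetaDeriv p 2 (p + ((a.1 : ℕ) + 1)) τ))
      (Sum.elim
        (fun (a : Fin (2 * p - 1) × Fin 2) (τ : ℍ) =>
          (τ : ℂ) ^ (a.2 : ℕ) * thetaDeriv p 1 ((a.1 : ℕ) + 1) τ)
        (fun (r : Fin (2 * p + 1)) (τ : ℍ) => thetaDeriv p 0 (r : ℕ) τ))) := by
  let v (y : (ℕ × Set.Icc 0 (2 * p : ℤ)) × ℕ) (τ : ℍ) : ℂ :=
    thetaDeriv p y.1.1 y.1.2 τ * (τ : ℂ) ^ y.2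
  let e := Sum.elim
    (fun a : Fin ((p - 1) / 2) × Fin 3 =>
      (((2, ⟨p - (a.1 + 1), by grind⟩), a.2) : (ℕ × Set.Icc 0 (2 * p : ℤ)) × ℕ))
    (Sum.elim
      (fun a : Fin (2 * p - 1) × Fin 2 => ((1, ⟨a.1 + 1, by grind⟩), a.2))
      (fun r : Fin (2 * p + 1) => ((0, ⟨r, by grind⟩), 0)))
  let w : (Fin ((p - 1) / 2) × Fin 3) ⊕ ((Fin (2 * p - 1) × Fin 2) ⊕ Fin (2 * p + 1)) → ℍ → ℂ :=
    Sum.elim (fun a => v ((2, ⟨p + (a.1 + 1), by grind⟩), a.2)) 0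
  have he : Function.Injective e := by
    rintro (⟨r, i⟩ | ⟨r, i⟩ | r) (⟨s, j⟩ | ⟨s, j⟩ | s) h <;> grind
  have hw : ∀ a, w a ∈ Submodule.span ℂ (v '' (Set.range e)ᶜ) := by
    rintro (⟨r, i⟩ | _)
    · refine Submodule.subset_span ⟨_, ?_, rfl⟩
      rintro ⟨⟨s, j⟩ | ⟨s, j⟩ | s, h⟩ <;> grind
    · exact zero_mem _
  have hsub : LinearIndependent ℂ fun a => v (e a) - w a :=
    linearIndependent_sub_of_mem_span_compl_range (linearIndependent_thetaDeriv_mul_pow hp) he hw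
  convert hsub using 1
  funext idx τ
  rcases idx with ⟨r, i⟩ | ⟨r, i⟩ | r <;> simp [e, w, v, mul_sub, mul_comm]

end ThetaIndependence

/-- Let `p ≥ 3` be odd.  The `(15p-5)/2` holomorphic functions on
the upper half-plane
`τ ↦ τ^i (θ''_{p-r}(τ) - θ''_{p+r}(τ))` for `1 ≤ r ≤ (p-1)/2`, `0 ≤ i ≤ 2`;
`τ ↦ τ^i θ'_r(τ)` for `1 ≤ r ≤ 2p-1`, `0 ≤ i ≤ 1`; and
`τ ↦ θ_r(τ)` for `0 ≤ r ≤ 2p`,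
are linearly independent over `ℂ`. -/
theorem theta_family_linearIndependent (p : ℕ) (hp : Odd p) (hp3 : 3 ≤ p) :
    LinearIndependent ℂ
      (fun idx : (Fin ((p - 1) / 2) × Fin 3) ⊕ ((Fin (2 * p - 1) × Fin 2) ⊕ Fin (2 * p + 1)) =>
        match idx with
        | Sum.inl (r, i) => fun τ : UpperHalfPlane =>
            (τ : ℂ) ^ (i : ℕ) *
              (thetaDeriv p 2 ((p : ℤ) - ((r : ℕ) + 1)) τ -
                thetaDeriv p 2 ((p : ℤ) + ((r : ℕ) + 1)) τ)
        | Sum.inr (Sum.inl (r, i)) => fun τ : UpperHalfPlane =>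
            (τ : ℂ) ^ (i : ℕ) * thetaDeriv p 1 ((r : ℕ) + 1) τ
        | Sum.inr (Sum.inr r) => fun τ : UpperHalfPlane =>
            thetaDeriv p 0 (r : ℕ) τ) := by
  convert theta_family_linearIndependent_general (p := p) (by omega) using 1
  funext idx
  rcases idx with _ | _ | _ <;> rfl

end
end
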